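/- Suppose that F(Φ(b)) ≤ Φ(opt F(b)) for every b ∈ L, and let a ∈ L satisfy a ≤ Φ(multi F(a)). Then multi F(a) ≤ gfp Φ. -/

import Mathlib

/-- `opt F (a) = a ⊔ F a`. -/
def optF {L : Type*} [CompleteLattice L] (F : L → L) (a : L) : L := a ⊔ F a

/-- `multi F (a)` is the least fixed point of the monotone map `b ↦ a ⊔ F b`. -/
def multiF {L : Type*} [CompleteLattice L] (F : L → L) (hF : Monotone F)
    (a : L) : L :=
  OrderHom.lfp ⟨fun b => a ⊔ F b, fun _ _ h => sup_le_sup_left (hF h) a⟩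

theorem multiF_le_gfp {L : Type*} [CompleteLattice L] (F : L → L)
    (hF : Monotone F) (Φ : L → L) (hΦ : Monotone Φ)
    (h : ∀ b : L, F (Φ b) ≤ Φ (optF F b))
    (a : L) (ha : a ≤ Φ (multiF F hF a)) :
    multiF F hF a ≤ OrderHom.gfp ⟨Φ, hΦ⟩ := by
  have hfix : a ⊔ F (multiF F hF a) = multiF F hF a :=
    OrderHom.map_lfp ⟨fun b => a ⊔ F b, fun _ _ h => sup_le_sup_left (hF h) a⟩
  have hopt : optF F (multiF F hF a) = multiF F hF a :=
    sup_eq_left.2 (le_sup_right.trans hfix.le)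
  have hF' : F (Φ (multiF F hF a)) ≤ Φ (multiF F hF a) :=
    (h _).trans_eq (congrArg Φ hopt)
  -- `Φ (multiF F hF a)` is a pre-fixed point of `b ↦ a ⊔ F b`, so the least fixed point
  -- `multiF F hF a` lies below it and is thus a post-fixed point of `Φ`.
  exact OrderHom.le_gfp _ (OrderHom.lfp_le _ (sup_le ha hF'))
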